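/- Main theorem (triviality of isotropy for combined theories): let 𝕋₁, 𝕋₂ be equational theories over disjoint signatures Σ₁, Σ₂ such that each 𝕋ᵢ contains at least one function symbol of positive arity that is neither constant nor a projection in 𝕋ᵢ. Then for every n ≥ 0, the logical isotropy group G_{𝕋₁+𝕋₂}(Mₙ) of the free model Mₙ of 𝕋₁ + 𝕋₂ on n generators is trivial: G_{𝕋₁+𝕋₂}(Mₙ) = {[x]}. -/

import Mathlib

/-- First-order terms over symbols `S` with arity `ar` and variables `V`. -/
inductive Tm (S : Type) (ar : S → ℕ) (V : Type) : Type
  | var : V → Tm S ar V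
  | app : (f : S) → (Fin (ar f) → Tm S ar V) → Tm S ar V

namespace Tm
variable {S : Type} {ar : S → ℕ} {V W : Type}

def mapVar (g : V → W) : Tm S ar V → Tm S ar W
  | var v => var (g v)
  | app f ts => app f (fun i => (ts i).mapVar g)

def bind : Tm S ar V → (V → Tm S ar W) → Tm S ar W
  | var v, g => g v
  | app f ts, g => app f (fun i => (ts i).bind g)

/-- All variables of a term belong to a given set. -/
def VarsIn : Tm S ar V → Set V → Prop
  | var v, A => v ∈ A
  | app _ ts, A => ∀ i, VarsIn (ts i) A

/-- The term contains at least one variable. -/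
def HasVar : Tm S ar V → Prop
  | var _ => True
  | app _ ts => ∃ i, HasVar (ts i)

end Tm

/-- The combined signature: operation symbols of the two theories (`op`),
generator constants `y₁,…,yₙ` (`gen`), and indeterminate constants `x = ind 0`,
`xᵢ = ind i` (`ind`). -/
inductive CSym (F : Bool → Type) (n : ℕ) : Type
  | op : (b : Bool) → F b → CSym F n
  | gen : Fin n → CSym F n
  | ind : ℕ → CSym F n

namespace CSym
variable {F : Bool → Type} {n : ℕ}

def arity (arF : ∀ b, F b → ℕ) : CSym F n → ℕ
  | op b f => arF b f
  | gen _ => 0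
  | ind _ => 0

/-- Which of the four component signatures a symbol belongs to:
`0 = Σ₁`, `1 = Σ₂`, `2 = Σ₃`, `3 = Σ₄`. -/
def sig : CSym F n → Fin 4
  | op false _ => 0
  | op true _ => 1
  | gen _ => 2
  | ind _ => 3

end CSym
section Setup

variable (F : Bool → Type) (arF : ∀ b, F b → ℕ) (n : ℕ)

/-- Closed terms over the combined signature `Σ = Σ₁ ∪ Σ₂ ∪ Σ₃ ∪ Σ₄`. -/
abbrev CT := Tm (CSym F n) (CSym.arity arF) Empty

/-- The root symbol of a closed term. -/
def rootSym : CT F arF n → CSym F n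
  | .var v => v.elim
  | .app f _ => f

/-- All symbols of the closed term satisfy the predicate `P`. -/
def InSig (P : CSym F n → Prop) : CT F arF n → Prop
  | .var v => v.elim
  | .app f ts => P f ∧ ∀ i, InSig P (ts i)

/-- A closed term is pure if all of its symbols belong to a single one of the
four component signatures. -/
def IsPure (t : CT F arF n) : Prop := ∃ k : Fin 4, InSig F arF n (fun s => s.sig = k) t

/-- The rank of a closed term: `0` if pure, and otherwise `1` plus the maximal
rank of its alien subterms. -/
def rank : CT F arF n → ℕ
  | .var v => v.elim
  | .app f ts =>
      Finset.univ.sup fun i =>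
        rank (ts i) + (if (rootSym F arF n (ts i)).sig = f.sig then 0 else 1)

/-- The maximal subterms of `t` whose root is outside signature `k`. -/
def aliensUnder (k : Fin 4) : CT F arF n → Set (CT F arF n)
  | .var v => v.elim
  | .app f ts =>
      if f.sig = k then ⋃ i, aliensUnder k (ts i) else {Tm.app f ts}

/-- The alien subterms of a closed term (relative to the signature of its root). -/
def aliensSet : CT F arF n → Set (CT F arF n)
  | .var v => v.elim
  | .app f ts => ⋃ i, aliensUnder F arF n f.sig (ts i)

/-- All alien subterms at arbitrary depth. -/
def allAliensSet : CT F arF n → Set (CT F arF n)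
  | .var v => v.elim
  | .app f ts =>
      ⋃ i, (if (rootSym F arF n (ts i)).sig = f.sig then (∅ : Set _) else {ts i}) ∪
        allAliensSet (ts i)

/-- View a closed combined term through the layer of theory `b`: keep the
top part built from `Σ_b`-symbols and regard the maximal non-`Σ_b`-rooted
subterms as opaque constants. -/
def layerize (b : Bool) : CT F arF n → Tm (F b) (arF b) (CT F arF n)
  | .app (.op b' f) ts =>
      if h : b' = b then h ▸ (Tm.app f (fun i => layerize b' (ts i)))
      else Tm.var (Tm.app (.op b' f) ts)
  | t => Tm.var t

end Setup
section Setup2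

variable (F : Bool → Type) (arF : ∀ b, F b → ℕ) (n : ℕ)
variable (Ax : ∀ b, Set (Tm (F b) (arF b) ℕ × Tm (F b) (arF b) ℕ))

mutual
/-- The isomorphism relation `≅` on closed combined terms, defined together
with the layer congruences: two terms are isomorphic iff their roots lie in the
same component signature and their alien abstractions are congruent modulo the
corresponding theory (for the constant signatures `Σ₃, Σ₄` this is syntactic
equality). -/
inductive Iso : CT F arF n → CT F arF n → Prop where
  | opEq (b : Bool) (u v : CT F arF n) :
      (∃ g : F b, rootSym F arF n u = .op b g) →
      (∃ g : F b, rootSym F arF n v = .op b g) →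
      LEq b (layerize F arF n b u) (layerize F arF n b v) → Iso u v
  | constEq (t : CT F arF n) :
      ((rootSym F arF n t).sig = 2 ∨ (rootSym F arF n t).sig = 3) → Iso t t

/-- The congruence `≈_b` on `Σ_b`-terms whose constants are closed combined
terms (representing their `≅`-classes): generated by the substitution instances
of the axioms of `𝕋_b` together with the identification of `≅`-related
constants. -/
inductive LEq : (b : Bool) →
    Tm (F b) (arF b) (CT F arF n) → Tm (F b) (arF b) (CT F arF n) → Prop where
  | refl (b) (t) : LEq b t t
  | symm {b s t} : LEq b s t → LEq b t s
  | trans {b s t u} : LEq b s t → LEq b t u → LEq b s u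
  | congr (b) (g : F b) (ts us : Fin (arF b g) → Tm (F b) (arF b) (CT F arF n)) :
      (∀ i, LEq b (ts i) (us i)) → LEq b (.app g ts) (.app g us)
  | varRel (b) (s t : CT F arF n) : Iso s t → LEq b (.var s) (.var t)
  | ax (b) (u v : Tm (F b) (arF b) ℕ) : (u, v) ∈ Ax b →
      ∀ σ : ℕ → Tm (F b) (arF b) (CT F arF n), LEq b (u.bind σ) (v.bind σ)
end

end Setup2
section Setup3

variable (F : Bool → Type) (arF : ∀ b, F b → ℕ) (n : ℕ)
variable (Ax : ∀ b, Set (Tm (F b) (arF b) ℕ × Tm (F b) (arF b) ℕ))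

/-- The combined algebra `𝒜 = Term^c(Σ)/≅`. -/
abbrev Alg := Quot (Iso F arF n Ax)

/-- Provable equality in the theory `𝕋_b` on terms with variables (equivalently
the smallest `Σ_b`-congruence containing all substitution instances of the
axioms of `𝕋_b`); with `V := Alg` this is the congruence `≈_b` on
`Term^c(Σ_b, Term^c(Σ)/≅)`. -/
inductive AxCong (b : Bool) {V : Type} : Tm (F b) (arF b) V → Tm (F b) (arF b) V → Prop where
  | refl (t) : AxCong b t t
  | symm {s t} : AxCong b s t → AxCong b t s
  | trans {s t u} : AxCong b s t → AxCong b t u → AxCong b s u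
  | congr (g : F b) (ts us : Fin (arF b g) → Tm (F b) (arF b) V) :
      (∀ i, AxCong b (ts i) (us i)) → AxCong b (.app g ts) (.app g us)
  | ax (u v : Tm (F b) (arF b) ℕ) : (u, v) ∈ Ax b →
      ∀ σ : ℕ → Tm (F b) (arF b) V, AxCong b (u.bind σ) (v.bind σ)

/-- Abstraction of alien subterms: `[t]ᵇ_≅ ∈ Term^c(Σ_b, Term^c(Σ)/≅)`. -/
def absQ (b : Bool) (t : CT F arF n) : Tm (F b) (arF b) (Alg F arF n Ax) :=
  (layerize F arF n b t).mapVar (Quot.mk _)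

attribute [local instance] Classical.propDecidable

/-- The interpretation `t^𝒜` of a closed combined term in the combined algebra:
a term collapses to (the class of) an alien subterm whose class its alien
abstraction is `≈_b`-congruent to, and is interpreted by its own class
otherwise. -/
noncomputable def interp : CT F arF n → Alg F arF n Ax
  | .app (.op b g) ts =>
      let t' : CT F arF n := .app (.op b g) (fun i => (interp (ts i)).out)
      if h : ∃ u, u ∈ aliensSet F arF n t' ∧
          AxCong F arF Ax b (absQ F arF n Ax b t') (.var (Quot.mk _ u))
      then Quot.mk _ h.choose
      else Quot.mk _ t'
  | t => Quot.mk _ t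

end Setup3
section Setup4

variable (F : Bool → Type) (arF : ∀ b, F b → ℕ) (n : ℕ)
variable (Ax : ∀ b, Set (Tm (F b) (arF b) ℕ × Tm (F b) (arF b) ℕ))

/-- Substitution of a closed term `w` for the indeterminate constant `x_j` in a
closed combined term. -/
def substInd (j : ℕ) (w : CT F arF n) : CT F arF n → CT F arF n
  | .var v => v.elim
  | .app (.ind j') ts => if j' = j then w else .app (.ind j') ts
  | .app f ts => .app f (fun i => substInd j w (ts i))

/-- The indeterminate constant `x_i` as a closed term (`x = xTm 0`). -/
def xTm (i : ℕ) : CT F arF n := .app (.ind i) Fin.elim0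

/-- Replace every indeterminate constant occurring in a term by `x`. -/
def indToX : CT F arF n → CT F arF n
  | .var v => v.elim
  | .app (.ind _) _ => xTm F arF n 0
  | .app f ts => .app f (fun i => indToX (ts i))

/-- Embedding of `Σ_b`-terms into combined terms. -/
def embedOp (b : Bool) {V : Type} : Tm (F b) (arF b) V → Tm (CSym F n) (CSym.arity arF) V
  | .var v => .var v
  | .app g ts => .app (.op b g) (fun i => embedOp b (ts i))

/-- Provable equality for the (combination of the) theories `𝕋_b` (`b ∈ B`) on
closed terms over the sub-signature of symbols satisfying `P`: the smallest
congruence on that set of closed terms containing all substitution instances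
(by closed terms over the sub-signature) of the axioms. -/
inductive PE (B : Set Bool) (P : CSym F n → Prop) : CT F arF n → CT F arF n → Prop where
  | refl (t) : InSig F arF n P t → PE B P t t
  | symm {s t} : PE B P s t → PE B P t s
  | trans {s t u} : PE B P s t → PE B P t u → PE B P s u
  | congr (f : CSym F n) (ts us : Fin (CSym.arity arF f) → CT F arF n) : P f →
      (∀ i, PE B P (ts i) (us i)) → PE B P (.app f ts) (.app f us)
  | ax (b : Bool) (hb : b ∈ B) (u v : Tm (F b) (arF b) ℕ) (h : (u, v) ∈ Ax b)
      (σ : ℕ → CT F arF n) : (∀ m, InSig F arF n P (σ m)) →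
      PE B P ((embedOp F arF n b u).bind σ) ((embedOp F arF n b v).bind σ)

/-- The sub-signature consisting of the operations of the theories in `B`, all
generator constants `y₁,…,yₙ`, and the indeterminates `x_j` with `j ∈ J`. -/
def SigP (B : Set Bool) (J : Set ℕ) : CSym F n → Prop
  | .op b _ => b ∈ B
  | .gen _ => True
  | .ind j => j ∈ J

/-- The (combination of the) theories in `B` is non-trivial: it does not prove
the equation `x = y` for distinct variables (equivalently, it does not identify
two distinct indeterminate constants). -/
def Nontriv (B : Set Bool) : Prop :=
  ¬ PE F arF n Ax B (SigP F n B Set.univ) (xTm F arF n 1) (xTm F arF n 2)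

/-- Membership of (the class of) `t` in the logical isotropy group of the free
model on `n` generators of the combination of the theories in `B`: `t` is a
closed term over the signature extended by the constant `x` that is invertible
under substitution into `x` and commutes generically with every operation. -/
def GIso (B : Set Bool) (t : CT F arF n) : Prop :=
  InSig F arF n (SigP F n B {0}) t ∧
  (∃ tinv, InSig F arF n (SigP F n B {0}) tinv ∧
    PE F arF n Ax B (SigP F n B {0}) (substInd F arF n 0 tinv t) (xTm F arF n 0) ∧
    PE F arF n Ax B (SigP F n B {0}) (substInd F arF n 0 t tinv) (xTm F arF n 0)) ∧
  ∀ b, b ∈ B → ∀ g : F b,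
    PE F arF n Ax B (SigP F n B {j | 1 ≤ j ∧ j ≤ arF b g})
      (substInd F arF n 0 (.app (.op b g) (fun i => xTm F arF n (i.val + 1))) t)
      (.app (.op b g) (fun i => substInd F arF n 0 (xTm F arF n (i.val + 1)) t))

/-- `g` is a projection in `𝕋_b`. -/
def IsProj (b : Bool) (g : F b) : Prop :=
  ∃ i : Fin (arF b g),
    AxCong F arF Ax b (V := ℕ) (.app g (fun j => .var j.val)) (.var i.val)

/-- `g` is constant in `𝕋_b`: `𝕋_b` proves `g(y₁,…,y_m) = s` for pairwise
distinct variables none of which occurs in `s`. -/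
def IsConst (b : Bool) (g : F b) : Prop :=
  ∃ s : Tm (F b) (arF b) ℕ, s.VarsIn {m | arF b g ≤ m} ∧
    AxCong F arF Ax b (V := ℕ) (.app g (fun j => .var j.val)) s

end Setup4
section Models

variable (F : Bool → Type) (arF : ∀ b, F b → ℕ) (n : ℕ)
variable (Ax : ∀ b, Set (Tm (F b) (arF b) ℕ × Tm (F b) (arF b) ℕ))

/-- Evaluation of a `Σ_b`-term in a set equipped with operations. -/
def evalTm {α : Type} (ops : ∀ b (g : F b), (Fin (arF b g) → α) → α)
    (b : Bool) {V : Type} (ρ : V → α) : Tm (F b) (arF b) V → α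
  | .var v => ρ v
  | .app g ts => ops b g (fun i => evalTm ops b ρ (ts i))

/-- A (set-based) model of the combined theory `𝕋₁ + 𝕋₂`. -/
structure TModel where
  carrier : Type
  ops : ∀ b (g : F b), (Fin (arF b g) → carrier) → carrier
  sat : ∀ b u v, (u, v) ∈ Ax b → ∀ ρ : ℕ → carrier,
      evalTm F arF ops b ρ u = evalTm F arF ops b ρ v

/-- Homomorphisms of models. -/
@[ext]
structure TModelHom (M N : TModel F arF Ax) where
  toFun : M.carrier → N.carrier
  map_ops : ∀ b (g : F b) (args : Fin (arF b g) → M.carrier),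
      toFun (M.ops b g args) = N.ops b g (fun i => toFun (args i))

/-- The identity homomorphism. -/
def TModelHom.id (M : TModel F arF Ax) : TModelHom F arF Ax M M :=
  ⟨fun a => a, fun _ _ _ => rfl⟩

/-- Composition of homomorphisms. -/
def TModelHom.comp {M M' M'' : TModel F arF Ax} (h' : TModelHom F arF Ax M' M'')
    (h : TModelHom F arF Ax M M') : TModelHom F arF Ax M M'' :=
  ⟨fun a => h'.toFun (h.toFun a), fun b g args => by
    simp [h.map_ops, h'.map_ops]⟩

/-- `M` together with the `n` elements `gens` is a free model on `n`
generators: the universal property. -/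
def IsFreeOn (M : TModel F arF Ax) (gens : Fin n → M.carrier) : Prop :=
  ∀ (N : TModel F arF Ax) (a : Fin n → N.carrier),
    ∃! h : TModelHom F arF Ax M N, ∀ i, h.toFun (gens i) = a i

end Models

namespace FS

section Basic
variable {F : Bool → Type} {arF : ∀ b, F b → ℕ}
variable {Ax : ∀ b, Set (Tm (F b) (arF b) ℕ × Tm (F b) (arF b) ℕ)}

theorem bind_bind {S : Type} {ar : S → ℕ} {U V W : Type} (t : Tm S ar U)
    (σ : U → Tm S ar V) (τ : V → Tm S ar W) :
    (t.bind σ).bind τ = t.bind (fun u => (σ u).bind τ) := by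
  induction t with
  | var v => rfl
  | app f ts ih => simp only [Tm.bind, ih]

theorem bind_var {S : Type} {ar : S → ℕ} {U : Type} (t : Tm S ar U) :
    t.bind Tm.var = t := by
  induction t with
  | var v => rfl
  | app f ts ih => simp only [Tm.bind, ih]

theorem bind_congr_on {S : Type} {ar : S → ℕ} {U V : Type} (t : Tm S ar U) (E : Set U)
    (h : t.VarsIn E) (σ τ : U → Tm S ar V) (hst : ∀ u ∈ E, σ u = τ u) :
    t.bind σ = t.bind τ := by
  induction t with
  | var v => exact hst v h
  | app f ts ih => simp only [Tm.bind]; congr 1; funext i; exact ih i (h i)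

theorem varsIn_bind {S : Type} {ar : S → ℕ} {U V : Type} (t : Tm S ar U) (E : Set U)
    (h : t.VarsIn E) (σ : U → Tm S ar V) (D : Set V) (hst : ∀ u ∈ E, (σ u).VarsIn D) :
    (t.bind σ).VarsIn D := by
  induction t with
  | var v => exact hst v h
  | app f ts ih => intro i; exact ih i (h i)

theorem AxCong_bind {b : Bool} {V W : Type} {s t : Tm (F b) (arF b) V}
    (h : AxCong F arF Ax b s t) (σ : V → Tm (F b) (arF b) W) :
    AxCong F arF Ax b (s.bind σ) (t.bind σ) := by
  induction h with
  | refl t => exact .refl _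
  | symm _ ih => exact .symm ih
  | trans _ _ ih1 ih2 => exact .trans ih1 ih2
  | congr g ts us _ ih => exact .congr g _ _ ih
  | ax u v huv τ => rw [bind_bind, bind_bind]; exact .ax u v huv _

theorem AxCong_bind_congr {b : Bool} {V W : Type} (t : Tm (F b) (arF b) V)
    (σ τ : V → Tm (F b) (arF b) W) (h : ∀ v, AxCong F arF Ax b (σ v) (τ v)) :
    AxCong F arF Ax b (t.bind σ) (t.bind τ) := by
  induction t with
  | var v => exact h v
  | app f ts ih => exact .congr f _ _ ih

def Cons (arF : ∀ b, F b → ℕ) (Ax : ∀ b, Set (Tm (F b) (arF b) ℕ × Tm (F b) (arF b) ℕ))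
    (b : Bool) : Prop := ¬ AxCong F arF Ax b (V := ℕ) (.var 0) (.var 1)

theorem cons_of {b : Bool} {g : F b} (h1 : 1 ≤ arF b g) (h2 : ¬ IsProj F arF Ax b g) :
    Cons arF Ax b := by
  intro h
  apply h2
  refine ⟨⟨0, h1⟩, ?_⟩
  have := AxCong_bind h (fun k => if k = 0 then (.app g (fun j => .var j.val)) else
    (.var 0 : Tm (F b) (arF b) ℕ))
  simpa [Tm.bind] using this

/-- In a consistent theory a term equal to a variable contains that variable. -/
theorem mem_of_eq_var {b : Bool} (hc : Cons arF Ax b) {V : Type} {p : Tm (F b) (arF b) V}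
    {E : Set V} (hp : p.VarsIn E) {v : V} (h : AxCong F arF Ax b p (.var v)) : v ∈ E := by
  classical
  by_contra hv
  apply hc
  have h1 := AxCong_bind h (fun _ => (.var 0 : Tm (F b) (arF b) ℕ))
  have h2 := AxCong_bind h (fun w => if w = v then (.var 1 : Tm (F b) (arF b) ℕ) else .var 0)
  rw [bind_congr_on p E hp _ (fun _ => (.var 0 : Tm (F b) (arF b) ℕ))] at h2
  · simpa [Tm.bind] using h1.symm.trans h2
  · intro u hu
    have : u ≠ v := fun e => hv (e ▸ hu)
    simp [this]

theorem evalTm_bind {α : Type} (ops : ∀ b (g : F b), (Fin (arF b g) → α) → α)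
    (b : Bool) {V W : Type} (ρ : W → α) (t : Tm (F b) (arF b) V) (σ : V → Tm (F b) (arF b) W) :
    evalTm F arF ops b ρ (t.bind σ) = evalTm F arF ops b (fun v => evalTm F arF ops b ρ (σ v)) t := by
  induction t with
  | var v => rfl
  | app f ts ih => simp only [Tm.bind, evalTm, ih]

theorem eval_sound (M : TModel F arF Ax) (b : Bool) {V : Type} (ρ : V → M.carrier)
    {s t : Tm (F b) (arF b) V} (h : AxCong F arF Ax b s t) :
    evalTm F arF M.ops b ρ s = evalTm F arF M.ops b ρ t := by
  induction h with
  | refl t => rfl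
  | symm _ ih => exact ih.symm
  | trans _ _ ih1 ih2 => exact ih1.trans ih2
  | congr g ts us _ ih => simp only [evalTm, ih]
  | ax u v huv τ => rw [evalTm_bind, evalTm_bind]; exact M.sat b u v huv _

end Basic

section Construction
variable (F : Bool → Type) (arF : ∀ b, F b → ℕ) (n : ℕ)
variable (Ax : ∀ b, Set (Tm (F b) (arF b) ℕ × Tm (F b) (arF b) ℕ))

abbrev XX (n : ℕ) := Fin n ⊕ ℕ

/-- A combined model which, for each `b`, is free as a `𝕋_b`-model on the complement of `A b`. -/
structure Mdl where
  M : TModel F arF Ax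
  A : Bool → Set M.carrier
  xx : XX n → M.carrier
  xinj : Function.Injective xx
  xA : ∀ x b, xx x ∉ A b
  disj : ∀ w b, w ∈ A b → w ∉ A (!b)
  cover : ∀ w, (∀ b, w ∉ A b) → ∃ x, xx x = w
  indep : ∀ b (p q : Tm (F b) (arF b) {v // v ∉ A b}),
    evalTm F arF M.ops b Subtype.val p = evalTm F arF M.ops b Subtype.val q →
      AxCong F arF Ax b p q
  gen : ∀ b w, ∃ p : Tm (F b) (arF b) {v // v ∉ A b}, evalTm F arF M.ops b Subtype.val p = w

abbrev KK := (Σ b, F b) ⊕ ℕ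

def tmToW {S : Type} {ar : S → ℕ} {V : Type} :
    Tm S ar V → WType (α := V ⊕ S) (fun a => Fin (Sum.elim (fun _ => 0) ar a))
  | .var v => ⟨.inl v, Fin.elim0⟩
  | .app f ts => ⟨.inr f, fun i => tmToW (ts i)⟩

theorem tmToW_inj {S : Type} {ar : S → ℕ} {V : Type} :
    Function.Injective (tmToW (S := S) (ar := ar) (V := V)) := by
  intro s
  induction s with
  | var v =>
    intro t h
    cases t with
    | var w => injection h with h1 h2; cases h1; rfl
    | app g us => injection h with h1 h2; cases h1
  | app f ts ih =>
    intro t h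
    cases t with
    | var w => injection h with h1 h2; cases h1
    | app g us =>
      simp only [tmToW, WType.mk.injEq] at h
      obtain ⟨h1, h2⟩ := h
      cases h1
      congr 1
      funext i
      exact ih i (congrFun (eq_of_heq h2) i)

open Cardinal in
theorem card_tm (b : Bool) : #(Tm (F b) (arF b) (XX n ⊕ KK F)) ≤ #(KK F) := by
  have hinf : ℵ₀ ≤ #(KK F) := by
    rw [← Cardinal.infinite_iff]; infer_instance
  refine (Cardinal.mk_le_of_injective tmToW_inj).trans ?_
  refine WType.cardinalMk_le_max_aleph0_of_finite.trans ?_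
  refine max_le ?_ hinf
  have h1 : #(F b) ≤ #(KK F) :=
    Cardinal.mk_le_of_injective (f := fun f => Sum.inl ⟨b, f⟩) (by
      intro x y h; simpa using h)
  have h2 : #(XX n) ≤ #(KK F) := (Cardinal.mk_le_aleph0).trans hinf
  have h3 : #((XX n ⊕ KK F) ⊕ F b) = #(XX n) + #(KK F) + #(F b) := by simp
  rw [h3]
  exact Cardinal.add_le_of_le hinf (Cardinal.add_le_of_le hinf h2 le_rfl) h1

def st (b : Bool) (V : Type) : Setoid (Tm (F b) (arF b) V) :=
  ⟨AxCong F arF Ax b, ⟨.refl, .symm, .trans⟩⟩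

abbrev TT (b : Bool) := Quotient (st F arF Ax b (XX n ⊕ KK F))

def vr (b : Bool) (v : XX n ⊕ KK F) : TT F arF n Ax b := Quotient.mk _ (.var v)

variable {F arF Ax}

theorem vr_inj {b : Bool} (hc : Cons arF Ax b) : Function.Injective (vr F arF n Ax b) := by
  intro v w h
  have h' : AxCong F arF Ax b (.var v) (.var w) := Quotient.exact h
  have := mem_of_eq_var hc (E := {v}) (p := .var v) (by simp [Tm.VarsIn]) h'
  exact this.symm

theorem not_var_app {b : Bool} {g : F b} (hc : Cons arF Ax b) (h2 : ¬ IsProj F arF Ax b g)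
    {V : Type} (a : Fin (arF b g) → V) (ha : Function.Injective a) (v : V) :
    ¬ AxCong F arF Ax b (.app g (fun i => .var (a i))) (.var v) := by
  classical
  intro h
  obtain ⟨i, hi⟩ := mem_of_eq_var hc (E := Set.range a) (fun i => ⟨i, rfl⟩) h
  subst hi
  apply h2
  refine ⟨i, ?_⟩
  have := AxCong_bind h (fun w => (.var (if hw : ∃ j, a j = w then (hw.choose : Fin _).val else 0) :
    Tm (F b) (arF b) ℕ))
  have key : ∀ j, (if hw : ∃ k, a k = a j then (hw.choose : Fin _).val else 0) = j.val := by
    intro j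
    have hw : ∃ k, a k = a j := ⟨j, rfl⟩
    rw [dif_pos hw, ha hw.choose_spec]
  simp only [Tm.bind, key] at this
  exact this

theorem not_const_app {b : Bool} {g : F b} (h3 : ¬ IsConst F arF Ax b g)
    {V : Type} (a : Fin (arF b g) → V) (ha : Function.Injective a) (p : Tm (F b) (arF b) V)
    (hp : p.VarsIn (Set.range a)ᶜ) :
    ¬ AxCong F arF Ax b (.app g (fun i => .var (a i))) p := by
  classical
  intro h
  apply h3
  let σ : V → Tm (F b) (arF b) ℕ :=
    fun w => .var (if hw : ∃ j, a j = w then (hw.choose : Fin _).val else arF b g)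
  refine ⟨p.bind σ, varsIn_bind p _ hp σ _ ?_, ?_⟩
  · intro u hu
    have : ¬ ∃ j, a j = u := hu
    simp [σ, this, Tm.VarsIn]
  have := AxCong_bind h σ
  have key : ∀ j, (if hw : ∃ k, a k = a j then (hw.choose : Fin _).val else arF b g) = j.val := by
    intro j
    have hw : ∃ k, a k = a j := ⟨j, rfl⟩
    rw [dif_pos hw, ha hw.choose_spec]
  simp only [σ, Tm.bind, key] at this
  exact this

open Cardinal in
theorem exists_equiv {b : Bool} {g : F b} (h1 : 1 ≤ arF b g) (h2 : ¬ IsProj F arF Ax b g)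
    (h3 : ¬ IsConst F arF Ax b g) :
    Nonempty ({q : TT F arF n Ax b // ¬ ∃ v, vr F arF n Ax b v = q} ≃ KK F) := by
  have hc := cons_of h1 h2
  rw [← Cardinal.eq]
  apply le_antisymm
  · exact ((Cardinal.mk_subtype_le _).trans (Cardinal.mk_quotient_le)).trans (card_tm F arF n b)
  · have hK : #(KK F × ℕ) = #(KK F) := by
      have hinf : ℵ₀ ≤ #(KK F) := by
        rw [← Cardinal.infinite_iff]; infer_instance
      rw [Cardinal.mk_prod]
      simp only [Cardinal.lift_id, Cardinal.mk_nat]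
      exact Cardinal.mul_aleph0_eq hinf
    obtain ⟨φ⟩ := Cardinal.eq.1 hK
    let a : KK F → Fin (arF b g) → XX n ⊕ KK F := fun k i => .inr (φ (k, i.val))
    have ha : ∀ k, Function.Injective (a k) := by
      intro k i j h
      have := φ.injective (Sum.inr_injective h)
      simpa [Fin.ext_iff] using this
    refine Cardinal.mk_le_of_injective
      (f := fun k => ⟨Quotient.mk _ (.app g (fun i => .var (a k i))), ?_⟩) ?_
    · rintro ⟨v, hv⟩
      exact not_var_app hc h2 (a k) (ha k) v (Quotient.exact hv.symm)
    · intro k l h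
      by_contra hkl
      have h' : AxCong F arF Ax b _ _ := Quotient.exact (Subtype.ext_iff.1 h)
      refine not_const_app h3 (a k) (ha k) _ ?_ h'
      rintro i ⟨j, hj⟩
      have := φ.injective (Sum.inr_injective hj)
      simp at this
      exact hkl this.1

end Construction
section Construction2
variable {F : Bool → Type} {arF : ∀ b, F b → ℕ} {n : ℕ}
variable {Ax : ∀ b, Set (Tm (F b) (arF b) ℕ × Tm (F b) (arF b) ℕ)}

abbrev NN (F : Bool → Type) (n : ℕ) := XX n ⊕ (Bool × KK F)

def iot (c : Bool) : XX n ⊕ KK F → NN F n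
  | .inl x => .inl x
  | .inr k => .inr (!c, k)

def AA (c : Bool) : Set (NN F n) := {w | ∃ k, w = .inr (c, k)}

theorem iot_notMem (c : Bool) (v : XX n ⊕ KK F) : iot c v ∉ AA (F := F) (n := n) c := by
  rintro ⟨k, hk⟩
  cases v with
  | inl x => simp [iot] at hk
  | inr k => simp [iot] at hk

theorem iot_surj (c : Bool) (w : NN F n) (h : w ∉ AA c) : ∃ v, iot c v = w := by
  rcases w with x | ⟨b, k⟩
  · exact ⟨.inl x, rfl⟩
  · refine ⟨.inr k, ?_⟩
    have : b ≠ c := fun e => h ⟨k, by rw [e]⟩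
    have : (!c) = b := by revert this; cases b <;> cases c <;> simp
    simp [iot, this]

theorem iot_inj (c : Bool) : Function.Injective (iot (F := F) (n := n) c) := by
  intro v w h
  rcases v with x | k <;> rcases w with y | l <;> simp_all [iot]

open Classical in
noncomputable def psi (e : ∀ c, {q : TT F arF n Ax c // ¬ ∃ v, vr F arF n Ax c v = q} ≃ KK F)
    (c : Bool) (q : TT F arF n Ax c) : NN F n :=
  if h : ∃ v, vr F arF n Ax c v = q then iot c h.choose else .inr (c, e c ⟨q, h⟩)

variable (e : ∀ c, {q : TT F arF n Ax c // ¬ ∃ v, vr F arF n Ax c v = q} ≃ KK F)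

theorem psi_vr (hc : ∀ b, Cons arF Ax b) (c : Bool) (v) :
    psi e c (vr F arF n Ax c v) = iot c v := by
  have h : ∃ w, vr F arF n Ax c w = vr F arF n Ax c v := ⟨v, rfl⟩
  rw [psi, dif_pos h, vr_inj n (hc c) h.choose_spec]

theorem psi_bij (hc : ∀ b, Cons arF Ax b) (c : Bool) : Function.Bijective (psi e c) := by
  constructor
  · intro q r h
    by_cases hq : ∃ v, vr F arF n Ax c v = q
    · obtain ⟨v, rfl⟩ := hq
      by_cases hr : ∃ v, vr F arF n Ax c v = r
      · obtain ⟨w, rfl⟩ := hr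
        rw [psi_vr e hc, psi_vr e hc] at h
        rw [iot_inj c h]
      · rw [psi_vr e hc] at h
        exfalso
        apply iot_notMem c v
        rw [h, psi, dif_neg hr]
        exact ⟨_, rfl⟩
    · by_cases hr : ∃ v, vr F arF n Ax c v = r
      · obtain ⟨w, rfl⟩ := hr
        rw [psi_vr e hc] at h
        exfalso
        apply iot_notMem c w
        rw [← h, psi, dif_neg hq]
        exact ⟨_, rfl⟩
      · rw [psi, dif_neg hq, psi, dif_neg hr] at h
        have h' := (Prod.ext_iff.1 (Sum.inr_injective h)).2
        exact Subtype.ext_iff.1 ((e c).injective h')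
  · intro w
    by_cases hw : w ∈ AA c
    · obtain ⟨k, rfl⟩ := hw
      refine ⟨((e c).symm k).1, ?_⟩
      rw [psi, dif_neg ((e c).symm k).2]
      simp
    · obtain ⟨v, rfl⟩ := iot_surj c w hw
      exact ⟨_, psi_vr e hc c v⟩

noncomputable def psiE (hc : ∀ b, Cons arF Ax b) (c : Bool) : TT F arF n Ax c ≃ NN F n :=
  Equiv.ofBijective _ (psi_bij e hc c)

noncomputable def rp (hc : ∀ b, Cons arF Ax b) (c : Bool) (w : NN F n) :
    Tm (F c) (arF c) (XX n ⊕ KK F) := ((psiE e hc c).symm w).out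

theorem rp_spec (hc : ∀ b, Cons arF Ax b) (c : Bool) (w : NN F n) :
    psi e c (Quotient.mk _ (rp e hc c w)) = w := by
  rw [rp, Quotient.out_eq]
  exact (psiE e hc c).apply_symm_apply w

theorem rp_psi (hc : ∀ b, Cons arF Ax b) (c : Bool) (p : Tm (F c) (arF c) (XX n ⊕ KK F)) :
    AxCong F arF Ax c (rp e hc c (psi e c (Quotient.mk _ p))) p :=
  Quotient.exact ((psi_bij e hc c).1 (rp_spec e hc c _))

theorem rp_iot (hc : ∀ b, Cons arF Ax b) (c : Bool) (v : XX n ⊕ KK F) :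
    AxCong F arF Ax c (rp e hc c (iot c v)) (.var v) := by
  have := rp_psi e hc c (.var v)
  rwa [show (psi e c (Quotient.mk _ (.var v))) = iot c v from psi_vr e hc c v] at this

noncomputable def opsN (hc : ∀ b, Cons arF Ax b) (c : Bool) (g : F c)
    (a : Fin (arF c g) → NN F n) : NN F n :=
  psi e c (Quotient.mk _ (.app g (fun i => rp e hc c (a i))))

theorem evalN (hc : ∀ b, Cons arF Ax b) (c : Bool) {V : Type} (ρ : V → NN F n)
    (p : Tm (F c) (arF c) V) :
    evalTm F arF (opsN e hc) c ρ p = psi e c (Quotient.mk _ (p.bind (fun v => rp e hc c (ρ v)))) := by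
  induction p with
  | var v => exact (rp_spec e hc c _).symm
  | app g ts ih =>
    simp only [evalTm, ih, opsN, Tm.bind]
    congr 1
    apply Quotient.sound
    exact .congr g _ _ (fun i => rp_psi e hc c _)

noncomputable def theMdl (hc : ∀ b, Cons arF Ax b) : Mdl F arF n Ax where
  M := {
    carrier := NN F n
    ops := opsN e hc
    sat := by
      intro b u v huv ρ
      rw [evalN, evalN]
      congr 1
      apply Quotient.sound
      exact .ax u v huv _ }
  A := AA
  xx := .inl
  xinj := Sum.inl_injective
  xA := by rintro x b ⟨k, hk⟩; simp at hk
  disj := by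
    rintro w b ⟨k, rfl⟩ ⟨l, hl⟩
    simp at hl
  cover := by
    rintro (x | ⟨b, k⟩) h
    · exact ⟨x, rfl⟩
    · exact absurd ⟨k, rfl⟩ (h b)
  indep := by
    intro b p q h
    rw [evalN, evalN] at h
    have h' : AxCong F arF Ax b _ _ := Quotient.exact ((psi_bij e hc b).1 h)
    have h2 := AxCong_bind h' (fun x => .var (⟨iot b x, iot_notMem b x⟩ : {v // v ∉ AA b}))
    rw [bind_bind, bind_bind] at h2
    have key : ∀ v : {v : NN F n // v ∉ AA b}, AxCong F arF Ax b
        ((rp e hc b v.1).bind (fun x => .var (⟨iot b x, iot_notMem b x⟩ : {v // v ∉ AA b})))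
        (.var v) := by
      rintro ⟨v, hv⟩
      obtain ⟨x, rfl⟩ := iot_surj b v hv
      exact AxCong_bind (rp_iot e hc b x) _
    have k1 := AxCong_bind_congr p _ _ key
    have k2 := AxCong_bind_congr q _ _ key
    rw [bind_var] at k1 k2
    exact k1.symm.trans (h2.trans k2)
  gen := by
    intro b w
    refine ⟨(rp e hc b w).bind (fun x => .var ⟨iot b x, iot_notMem b x⟩), ?_⟩
    rw [evalN, bind_bind]
    refine Eq.trans ?_ (rp_spec e hc b w)
    congr 1
    apply Quotient.sound
    have := AxCong_bind_congr (rp e hc b w) _ _ (rp_iot e hc b)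
    rw [bind_var] at this
    exact this

theorem exists_mdl (hyp : ∀ b, ∃ g : F b, 1 ≤ arF b g ∧ ¬ IsProj F arF Ax b g ∧
    ¬ IsConst F arF Ax b g) : Nonempty (Mdl F arF n Ax) := by
  choose g h1 h2 h3 using hyp
  exact ⟨theMdl (fun c => (exists_equiv n (h1 c) (h2 c) (h3 c)).some)
    (fun c => cons_of (h1 c) (h2 c))⟩

end Construction2
section Main
variable {F : Bool → Type} {arF : ∀ b, F b → ℕ} {n : ℕ}
variable {Ax : ∀ b, Set (Tm (F b) (arF b) ℕ × Tm (F b) (arF b) ℕ)}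

/-- Evaluation of closed combined terms in a model under a valuation of the constants. -/
def evC (M : TModel F arF Ax) (f : XX n → M.carrier) : CT F arF n → M.carrier
  | .var v => v.elim
  | .app (.op b g) ts => M.ops b g (fun i => evC M f (ts i))
  | .app (.gen i) _ => f (.inl i)
  | .app (.ind j) _ => f (.inr j)

theorem evC_embed (M : TModel F arF Ax) (f : XX n → M.carrier) (b : Bool) {V : Type}
    (u : Tm (F b) (arF b) V) (σ : V → CT F arF n) :
    evC M f ((embedOp F arF n b u).bind σ) = evalTm F arF M.ops b (fun v => evC M f (σ v)) u := by
  induction u with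
  | var v => rfl
  | app g ts ih =>
    simp only [embedOp, Tm.bind, evalTm, evC]
    congr 1
    funext i
    exact ih i

theorem evC_PE (M : TModel F arF Ax) (f : XX n → M.carrier) {B : Set Bool} {P : CSym F n → Prop}
    {s t : CT F arF n} (h : PE F arF n Ax B P s t) : evC M f s = evC M f t := by
  induction h with
  | refl t _ => rfl
  | symm _ ih => exact ih.symm
  | trans _ _ ih1 ih2 => exact ih1.trans ih2
  | congr g ts us _ _ ih =>
    cases g with
    | op b g => simp only [evC]; congr 1; funext i; exact ih i
    | gen i => rfl
    | ind j => rfl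
  | ax b hb u v huv σ _ => rw [evC_embed, evC_embed]; exact M.sat b u v huv _

theorem evC_subst (M : TModel F arF Ax) (f : XX n → M.carrier) (w t : CT F arF n) :
    evC M f (substInd F arF n 0 w t) =
      evC M (Function.update f (.inr 0) (evC M f w)) t := by
  induction t with
  | var v => exact v.elim
  | app g ts ih =>
    cases g with
    | op b g => simp only [evC, substInd]; congr 1; funext i; exact ih i
    | gen i => simp [evC, substInd]
    | ind j =>
      by_cases hj : j = 0
      · subst hj; simp [evC, substInd]
      · simp [evC, substInd, hj]

theorem evC_congr (M : TModel F arF Ax) (f f' : XX n → M.carrier) (t : CT F arF n)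
    (ht : InSig F arF n (SigP F n Set.univ {0}) t) (h1 : ∀ i, f (.inl i) = f' (.inl i))
    (h2 : f (.inr 0) = f' (.inr 0)) : evC M f t = evC M f' t := by
  induction t with
  | var v => exact v.elim
  | app g ts ih =>
    cases g with
    | op b g => simp only [evC]; congr 1; funext i; exact ih i (ht.2 i)
    | gen i => exact h1 i
    | ind j =>
      have : j = 0 := ht.1
      subst this; exact h2

/-! The term model. -/

theorem inSig_true (t : CT F arF n) : InSig F arF n (fun _ => True) t := by
  induction t with
  | var v => exact v.elim
  | app g ts ih => exact ⟨trivial, ih⟩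

def stQ (F : Bool → Type) (arF : ∀ b, F b → ℕ) (n : ℕ)
    (Ax : ∀ b, Set (Tm (F b) (arF b) ℕ × Tm (F b) (arF b) ℕ)) : Setoid (CT F arF n) :=
  ⟨PE F arF n Ax Set.univ (fun _ => True), ⟨fun t => .refl t (inSig_true t), .symm, .trans⟩⟩

noncomputable def opsQ (b : Bool) (g : F b) (a : Fin (arF b g) → Quotient (stQ F arF n Ax)) :
    Quotient (stQ F arF n Ax) :=
  Quotient.mk _ (.app (.op b g) (fun i => (a i).out))

theorem opsQ_mk (b : Bool) (g : F b) (a : Fin (arF b g) → CT F arF n) :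
    opsQ (Ax := Ax) b g (fun i => Quotient.mk _ (a i)) = Quotient.mk _ (.app (.op b g) a) := by
  apply Quotient.sound
  exact .congr (CSym.op b g) _ _ trivial (fun i => Quotient.exact (s := stQ F arF n Ax) (Quotient.out_eq (Quotient.mk _ (a i))))

theorem evalQ (b : Bool) {V : Type} (ρ : V → Quotient (stQ F arF n Ax)) (u : Tm (F b) (arF b) V) :
    evalTm F arF opsQ b ρ u =
      Quotient.mk _ ((embedOp F arF n b u).bind (fun v => (ρ v).out)) := by
  induction u with
  | var v => exact (Quotient.out_eq _).symm
  | app g ts ih => simp only [evalTm, ih]; exact opsQ_mk b g _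

noncomputable def MQ (F : Bool → Type) (arF : ∀ b, F b → ℕ) (n : ℕ)
    (Ax : ∀ b, Set (Tm (F b) (arF b) ℕ × Tm (F b) (arF b) ℕ)) : TModel F arF Ax where
  carrier := Quotient (stQ F arF n Ax)
  ops := opsQ
  sat := by
    intro b u v huv ρ
    rw [evalQ, evalQ]
    apply Quotient.sound
    exact .ax b (Set.mem_univ b) u v huv _ (fun m => inSig_true _)

def xc : XX n → CT F arF n
  | .inl i => .app (.gen i) Fin.elim0
  | .inr j => .app (.ind j) Fin.elim0

theorem evC_MQ (t : CT F arF n) :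
    evC (MQ F arF n Ax) (fun x => Quotient.mk _ (xc x)) t = Quotient.mk _ t := by
  induction t with
  | var v => exact v.elim
  | app g ts ih =>
    cases g with
    | op b g =>
      refine Eq.trans ?_ (opsQ_mk b g ts)
      exact congrArg (opsQ b g) (funext ih)
    | gen i => simp only [evC, xc]; congr 2; funext i; exact i.elim0
    | ind i => simp only [evC, xc]; congr 2; funext i; exact i.elim0

theorem indToX_embed (b : Bool) {V : Type} (u : Tm (F b) (arF b) V) (σ : V → CT F arF n) :
    indToX F arF n ((embedOp F arF n b u).bind σ) =
      (embedOp F arF n b u).bind (fun v => indToX F arF n (σ v)) := by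
  induction u with
  | var v => rfl
  | app g ts ih =>
    simp only [embedOp, Tm.bind, indToX]
    congr 1
    funext i
    exact ih i

theorem indToX_inSig (t : CT F arF n) :
    InSig F arF n (SigP F n Set.univ {0}) (indToX F arF n t) := by
  induction t with
  | var v => exact v.elim
  | app g ts ih =>
    cases g with
    | op b g => exact ⟨trivial, ih⟩
    | gen i => exact ⟨trivial, fun i => i.elim0⟩
    | ind j => exact ⟨rfl, fun i => i.elim0⟩

theorem indToX_eq (t : CT F arF n) (ht : InSig F arF n (SigP F n Set.univ {0}) t) :
    indToX F arF n t = t := by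
  induction t with
  | var v => exact v.elim
  | app g ts ih =>
    cases g with
    | op b g => simp only [indToX]; congr 1; funext i; exact ih i (ht.2 i)
    | gen i => simp only [indToX]; congr 1; funext i; exact i.elim0
    | ind j =>
      have : j = 0 := ht.1
      subst this
      simp only [indToX, xTm]; congr 1; funext i; exact i.elim0

theorem PE_indToX {s t : CT F arF n} (h : PE F arF n Ax Set.univ (fun _ => True) s t) :
    PE F arF n Ax Set.univ (SigP F n Set.univ {0}) (indToX F arF n s) (indToX F arF n t) := by
  induction h with
  | refl t _ => exact .refl _ (indToX_inSig t)
  | symm _ ih => exact .symm ih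
  | trans _ _ ih1 ih2 => exact .trans ih1 ih2
  | congr g ts us _ _ ih =>
    cases g with
    | op b g => exact .congr (CSym.op b g) _ _ trivial ih
    | gen i => exact .congr (CSym.gen i) _ _ trivial ih
    | ind j => exact .refl _ (indToX_inSig (.app (.ind j) ts))
  | ax b hb u v huv σ _ =>
    rw [indToX_embed, indToX_embed]
    exact .ax b hb u v huv _ (fun m => indToX_inSig _)

/-! Freeness of the constructed model. -/

variable (D : Mdl F arF n Ax) (M : TModel F arF Ax)

noncomputable def ext (c : Bool) (f : D.M.carrier → M.carrier) (w : D.M.carrier) : M.carrier :=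
  evalTm F arF M.ops c (fun v => f v.1) (D.gen c w).choose

theorem ext_eval (c : Bool) (f : D.M.carrier → M.carrier)
    (p : Tm (F c) (arF c) {v // v ∉ D.A c}) :
    ext D M c f (evalTm F arF D.M.ops c Subtype.val p) =
      evalTm F arF M.ops c (fun v => f v.1) p :=
  eval_sound M c _ (D.indep c _ _ (D.gen c _).choose_spec)

theorem ext_var (c : Bool) (f : D.M.carrier → M.carrier) (v : D.M.carrier) (hv : v ∉ D.A c) :
    ext D M c f v = f v := ext_eval D M c f (.var ⟨v, hv⟩)

theorem ext_op (c : Bool) (f : D.M.carrier → M.carrier) (g : F c)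
    (a : Fin (arF c g) → D.M.carrier) :
    ext D M c f (D.M.ops c g a) = M.ops c g (fun i => ext D M c f (a i)) := by
  choose p hp using fun i => D.gen c (a i)
  have h1 := ext_eval D M c f (.app g p)
  simp only [evalTm, hp] at h1
  rw [h1]
  congr 1
  funext i
  rw [← hp i, ext_eval]

open Classical in
noncomputable def nf (f : XX n → M.carrier) : ℕ → D.M.carrier → M.carrier
  | 0, w => if hx : ∃ x, D.xx x = w then f hx.choose else f (.inr 0)
  | k+1, w => if hx : ∃ x, D.xx x = w then f hx.choose else
      if w ∈ D.A true then ext D M true (nf f k) w else ext D M false (nf f k) w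

theorem nf_xx (f : XX n → M.carrier) (k : ℕ) (x : XX n) : nf D M f k (D.xx x) = f x := by
  have hx : ∃ y, D.xx y = D.xx x := ⟨x, rfl⟩
  cases k <;> rw [nf, dif_pos hx, D.xinj hx.choose_spec]

theorem nf_A (f : XX n → M.carrier) (k : ℕ) (c : Bool) (w : D.M.carrier) (hw : w ∈ D.A c) :
    nf D M f (k+1) w = ext D M c (nf D M f k) w := by
  have hx : ¬ ∃ y, D.xx y = w := by rintro ⟨y, rfl⟩; exact D.xA _ _ hw
  rw [nf, dif_neg hx]
  cases c with
  | true => rw [if_pos hw]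
  | false => rw [if_neg (show w ∉ D.A true from D.disj w false hw)]

theorem nf_spec (f : XX n → M.carrier) (t : CT F arF n) :
    ∃ k0, ∀ k ≥ k0, nf D M f k (evC D.M D.xx t) = evC M f t := by
  induction t with
  | var v => exact v.elim
  | app g ts ih =>
    cases g with
    | gen i => exact ⟨0, fun k _ => nf_xx D M f k _⟩
    | ind i => exact ⟨0, fun k _ => nf_xx D M f k _⟩
    | op c g =>
      choose k0 hk0 using ih
      obtain ⟨K, hK⟩ : ∃ K, ∀ i, k0 i ≤ K :=
        ⟨Finset.univ.sup k0, fun i => Finset.le_sup (Finset.mem_univ i)⟩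
      have key : ∀ k ≥ K, ext D M c (nf D M f k) (evC D.M D.xx (.app (.op c g) ts)) =
          evC M f (.app (.op c g) ts) := by
        intro k hk
        simp only [evC]
        rw [ext_op]
        congr 1
        funext i
        by_cases hA : evC D.M D.xx (ts i) ∈ D.A c
        · rw [← nf_A D M f k c _ hA]
          exact hk0 i _ ((hK i).trans (hk.trans (Nat.le_succ k)))
        · rw [ext_var D M c _ _ hA]
          exact hk0 i _ ((hK i).trans hk)
      refine ⟨K + 1, fun k hk => ?_⟩
      by_cases hA : evC D.M D.xx (.app (.op c g) ts) ∈ D.A c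
      · obtain ⟨k, rfl⟩ : ∃ l, k = l + 1 := ⟨k - 1, by omega⟩
        rw [nf_A D M f k c _ hA]
        exact key k (by omega)
      · rw [← ext_var D M c (nf D M f k) _ hA]
        exact key k (by omega)

theorem faithful (f : XX n → M.carrier) {s t : CT F arF n}
    (h : evC D.M D.xx s = evC D.M D.xx t) : evC M f s = evC M f t := by
  obtain ⟨k, hk⟩ := nf_spec D M f s
  obtain ⟨l, hl⟩ := nf_spec D M f t
  rw [← hk (max k l) (le_max_left _ _), ← hl (max k l) (le_max_right _ _), h]

theorem faithful_PE {s t : CT F arF n} (h : evC D.M D.xx s = evC D.M D.xx t) :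
    PE F arF n Ax Set.univ (fun _ => True) s t := by
  have := faithful D (MQ F arF n Ax) (fun x => Quotient.mk _ (xc x)) h
  rw [evC_MQ, evC_MQ] at this
  exact Quotient.exact this

/-! Partial endomorphisms on the reachable part. -/

def Rch (w : D.M.carrier) : Prop := ∃ u, evC D.M D.xx u = w

open Classical in
noncomputable def phi (f : XX n → D.M.carrier) (w : D.M.carrier) : D.M.carrier :=
  if h : Rch D w then evC D.M f h.choose else w

theorem phi_ev (f : XX n → D.M.carrier) (u : CT F arF n) :
    phi D f (evC D.M D.xx u) = evC D.M f u := by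
  have h : Rch D (evC D.M D.xx u) := ⟨u, rfl⟩
  rw [phi, dif_pos h]
  exact faithful D D.M f h.choose_spec

theorem phi_xx (f : XX n → D.M.carrier) (x : XX n) : phi D f (D.xx x) = f x := by
  cases x with
  | inl i => exact phi_ev D f (.app (.gen i) Fin.elim0)
  | inr i => exact phi_ev D f (.app (.ind i) Fin.elim0)

theorem Rch_xx (x : XX n) : Rch D (D.xx x) := by
  cases x with
  | inl i => exact ⟨.app (.gen i) Fin.elim0, rfl⟩
  | inr i => exact ⟨.app (.ind i) Fin.elim0, rfl⟩

theorem Rch_op (b : Bool) (g : F b) (a : Fin (arF b g) → D.M.carrier) (h : ∀ i, Rch D (a i)) :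
    Rch D (D.M.ops b g a) := by
  choose u hu using h
  exact ⟨.app (.op b g) u, by simp only [evC, hu]⟩

theorem phi_op (f : XX n → D.M.carrier) (b : Bool) (g : F b) (a : Fin (arF b g) → D.M.carrier)
    (h : ∀ i, Rch D (a i)) :
    phi D f (D.M.ops b g a) = D.M.ops b g (fun i => phi D f (a i)) := by
  choose u hu using h
  have := phi_ev D f (.app (.op b g) u)
  simp only [evC, hu] at this
  rw [this]
  congr 1
  funext i
  rw [← hu i, phi_ev]

/-- Subalgebra for the theory `c` generated by `E`. -/
inductive Sp (c : Bool) (E : Set D.M.carrier) : D.M.carrier → Prop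
  | base (e) : e ∈ E → Sp c E e
  | op (g : F c) (a : Fin (arF c g) → D.M.carrier) : (∀ i, Sp c E (a i)) → Sp c E (D.M.ops c g a)

variable {D} in
theorem Sp.mono_sp {c : Bool} {E E' : Set D.M.carrier} (h : ∀ e ∈ E, Sp D c E' e) {w}
    (hw : Sp D c E w) : Sp D c E' w := by
  induction hw with
  | base e he => exact h e he
  | op g a _ ih => exact .op g a ih

variable {D} in
theorem Sp.repr {c : Bool} {E : Set D.M.carrier} (hE : ∀ e ∈ E, e ∉ D.A c) {w}
    (hw : Sp D c E w) : ∃ p : Tm (F c) (arF c) {v // v ∉ D.A c}, p.VarsIn {v | v.1 ∈ E} ∧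
      evalTm F arF D.M.ops c Subtype.val p = w := by
  induction hw with
  | base e he => exact ⟨.var ⟨e, hE e he⟩, he, rfl⟩
  | op g a _ ih =>
    choose p hp1 hp2 using ih
    exact ⟨.app g p, hp1, by simp only [evalTm, hp2]⟩

variable {D} in
theorem Sp.mem {c : Bool} (hc : Cons arF Ax c) {E : Set D.M.carrier} (hE : ∀ e ∈ E, e ∉ D.A c) {w}
    (hw : Sp D c E w) (hwA : w ∉ D.A c) : w ∈ E := by
  obtain ⟨p, hp, hpw⟩ := hw.repr hE
  have := D.indep c p (.var ⟨w, hwA⟩) hpw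
  exact mem_of_eq_var hc hp this

variable {D} in
theorem Sp.rch {c : Bool} {E : Set D.M.carrier} (hE : ∀ e ∈ E, Rch D e) {w}
    (hw : Sp D c E w) : Rch D w := by
  induction hw with
  | base e he => exact hE e he
  | op g a _ ih => exact Rch_op D c g a ih

variable {D} in
theorem Sp.phi {c : Bool} {E : Set D.M.carrier} (hE : ∀ e ∈ E, Rch D e) {w}
    (hw : Sp D c E w) (f : XX n → D.M.carrier) {E' : Set D.M.carrier}
    (h : ∀ e ∈ E, Sp D c E' (phi D f e)) : Sp D c E' (phi D f w) := by
  induction hw with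
  | base e he => exact h e he
  | op g a ha ih =>
    rw [phi_op D f c g a (fun i => (ha i).rch hE)]
    exact .op g _ ih

/-- Elements of height at most `k`. -/
def H : ℕ → Set D.M.carrier
  | 0 => Set.range D.xx
  | k+1 => Set.range D.xx ∪ {w | ∃ c, w ∈ D.A c ∧ Sp D c (H k ∩ (D.A c)ᶜ) w}

theorem H_x (k : ℕ) (x : XX n) : D.xx x ∈ H D k := by
  cases k with
  | zero => exact ⟨x, rfl⟩
  | succ k => exact .inl ⟨x, rfl⟩

theorem H_mono (k : ℕ) : H D k ⊆ H D (k+1) := by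
  induction k with
  | zero => exact fun w hw => .inl hw
  | succ k ih =>
    rintro w (hw | ⟨c, hwA, hw⟩)
    · exact .inl hw
    · exact .inr ⟨c, hwA, hw.mono_sp (E' := H D (k+1) ∩ (D.A c)ᶜ) (fun e he => Sp.base e ⟨ih he.1, he.2⟩)⟩

theorem H_rch (k : ℕ) : ∀ w ∈ H D k, Rch D w := by
  induction k with
  | zero => rintro w ⟨x, rfl⟩; exact Rch_xx D x
  | succ k ih =>
    rintro w (⟨x, rfl⟩ | ⟨c, hwA, hw⟩)
    · exact Rch_xx D x
    · exact hw.rch (fun e he => ih e he.1)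

theorem A_unique {b c : Bool} {w : D.M.carrier} (hb : w ∈ D.A b) (hc : w ∈ D.A c) : b = c := by
  by_contra h
  have : c = !b := by revert h; cases b <;> cases c <;> simp
  subst this
  exact D.disj w b hb hc

theorem H_A {k : ℕ} {c : Bool} {w : D.M.carrier} (hw : w ∈ H D (k+1)) (hA : w ∈ D.A c) :
    Sp D c (H D k ∩ (D.A c)ᶜ) w := by
  rcases hw with ⟨x, rfl⟩ | ⟨c', hwA, hw⟩
  · exact absurd hA (D.xA _ _)
  · rwa [A_unique D hA hwA]

theorem H_Sp {k : ℕ} {c : Bool} {w : D.M.carrier} (hw : w ∈ H D k) :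
    Sp D c (H D k ∩ (D.A c)ᶜ) w := by
  by_cases hA : w ∈ D.A c
  · cases k with
    | zero => obtain ⟨x, rfl⟩ := hw; exact absurd hA (D.xA _ _)
    | succ k => exact (H_A D hw hA).mono_sp (E' := H D (k+1) ∩ (D.A c)ᶜ) (fun e he => Sp.base e ⟨H_mono D k he.1, he.2⟩)
  · exact .base w ⟨hw, hA⟩

theorem Sp_H (hc : ∀ c, Cons arF Ax c) {k : ℕ} {c : Bool} {w : D.M.carrier}
    (hw : Sp D c (H D k ∩ (D.A c)ᶜ) w) : w ∈ H D (k+1) := by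
  by_cases hA : w ∈ D.A c
  · exact .inr ⟨c, hA, hw⟩
  · exact H_mono D k (hw.mem (hc c) (fun e he => he.2) hA).1

theorem H_le {k l : ℕ} (h : k ≤ l) : H D k ⊆ H D l :=
  monotone_nat_of_le_succ (H_mono D) h

theorem H_ex (hc : ∀ c, Cons arF Ax c) (u : CT F arF n) : ∃ k, evC D.M D.xx u ∈ H D k := by
  induction u with
  | var v => exact v.elim
  | app g ts ih =>
    cases g with
    | gen i => exact ⟨0, H_x D 0 _⟩
    | ind i => exact ⟨0, H_x D 0 _⟩
    | op c g =>
      choose k0 hk0 using ih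
      refine ⟨Finset.univ.sup k0 + 1, Sp_H D hc (c := c) ?_⟩
      simp only [evC]
      refine .op g _ (fun i => H_Sp D (H_le D (Finset.le_sup (Finset.mem_univ i)) (hk0 i)))

/-- Substitution raises the height by at most one. -/
theorem subst_H (hc : ∀ c, Cons arF Ax c) (f : XX n → D.M.carrier) (hf : ∀ x, f x ∈ H D 1) (k : ℕ) :
    ∀ w ∈ H D k, phi D f w ∈ H D (k+1) ∧
      ∀ c, w ∈ D.A c → Sp D c (H D k ∩ (D.A c)ᶜ) (phi D f w) := by
  induction k with
  | zero =>
    rintro w ⟨x, rfl⟩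
    rw [phi_xx]
    exact ⟨hf x, fun c h => absurd h (D.xA _ _)⟩
  | succ k ih =>
    intro w hw
    have key : ∀ c, w ∈ D.A c → Sp D c (H D (k+1) ∩ (D.A c)ᶜ) (phi D f w) := by
      intro c hA
      refine (H_A D hw hA).phi (fun e he => H_rch D k e he.1) f ?_
      intro e he
      exact H_Sp D (ih e he.1).1
    refine ⟨?_, key⟩
    rcases hw with ⟨x, rfl⟩ | ⟨c, hA, _⟩
    · rw [phi_xx]; exact H_le D (by omega) (hf x)
    · exact Sp_H D hc (key c hA)

theorem phi_inv (σ : Equiv.Perm (XX n)) {w : D.M.carrier} (hw : Rch D w) :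
    phi D (fun x => D.xx (σ x)) (phi D (fun x => D.xx (σ.symm x)) w) = w := by
  obtain ⟨u, rfl⟩ := hw
  suffices h : Rch D (phi D (fun x => D.xx (σ.symm x)) (evC D.M D.xx u)) ∧ phi D (fun x => D.xx (σ x))
    (phi D (fun x => D.xx (σ.symm x)) (evC D.M D.xx u)) = evC D.M D.xx u from h.2
  rw [phi_ev]
  induction u with
  | var v => exact v.elim
  | app g ts ih =>
    cases g with
    | gen i => simp only [evC]; rw [phi_xx]; simp [Rch_xx]
    | ind i => simp only [evC]; rw [phi_xx]; simp [Rch_xx]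
    | op c g =>
      simp only [evC]
      refine ⟨Rch_op D c g _ (fun i => (ih i).1), ?_⟩
      rw [phi_op D _ c g _ (fun i => (ih i).1)]
      congr 1
      funext i
      exact (ih i).2

/-- Renaming preserves heights and root types. -/
theorem rename_H (hc : ∀ c, Cons arF Ax c) (k : ℕ) : ∀ σ : Equiv.Perm (XX n),
    ∀ w ∈ H D k, phi D (fun x => D.xx (σ x)) w ∈ H D k ∧
      ∀ c, w ∈ D.A c ↔ phi D (fun x => D.xx (σ x)) w ∈ D.A c := by
  induction k with
  | zero =>
    rintro σ w ⟨x, rfl⟩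
    rw [phi_xx]
    exact ⟨H_x D 0 _, fun c => iff_of_false (D.xA _ _) (D.xA _ _)⟩
  | succ k ih =>
    rintro σ w hw
    have hr := H_rch D _ w hw
    rcases hw with ⟨x, rfl⟩ | ⟨c, hA, hw⟩
    · rw [phi_xx]
      exact ⟨H_x D _ _, fun c => iff_of_false (D.xA _ _) (D.xA _ _)⟩
    · have h1 : Sp D c (H D k ∩ (D.A c)ᶜ) (phi D (fun x => D.xx (σ x)) w) := by
        refine hw.phi (fun e he => H_rch D k e he.1) _ ?_
        intro e he
        refine .base _ ⟨(ih σ e he.1).1, fun h => he.2 (((ih σ e he.1).2 c).2 h)⟩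
      have h2 : phi D (fun x => D.xx (σ x)) w ∈ D.A c := by
        by_contra hn
        have h3 := h1.mem (hc c) (fun e he => he.2) hn
        have h4 := (ih σ.symm _ h3.1).2 c
        have h5 := phi_inv D σ.symm hr
        rw [Equiv.symm_symm] at h5
        rw [h5] at h4
        exact hn (h4.2 hA)
      refine ⟨Sp_H D hc h1, fun c' => ⟨fun h => ?_, fun h => ?_⟩⟩
      · rwa [A_unique D h hA]
      · rwa [A_unique D h h2]

theorem main1 (hyp : ∀ b, ∃ g : F b, 1 ≤ arF b g ∧ ¬ IsProj F arF Ax b g ∧ ¬ IsConst F arF Ax b g)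
    (t : CT F arF n) (ht : GIso F arF n Ax Set.univ t) :
    PE F arF n Ax Set.univ (SigP F n Set.univ {0}) t (xTm F arF n 0) := by
  classical
  obtain ⟨D⟩ := exists_mdl (n := n) hyp
  have hc : ∀ c, Cons arF Ax c := fun c => by
    obtain ⟨g, h1, h2, _⟩ := hyp c
    exact cons_of h1 h2
  obtain ⟨hsig, ⟨tinv, hinvsig, -, hinv⟩, hcomm⟩ := ht
  -- the elements `t(x_i)`
  let w : ℕ → D.M.carrier := fun i => evC D.M (Function.update D.xx (.inr 0) (D.xx (.inr i))) t
  have hw0 : w 0 = evC D.M D.xx t := by simp [w]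
  have hwinj : Function.Injective w := by
    intro i j hij
    have key : ∀ i, D.xx (.inr i) =
        evC D.M (Function.update D.xx (.inr 0) (w i)) tinv := by
      intro i
      have := evC_PE D.M (Function.update D.xx (.inr 0) (D.xx (.inr i))) hinv
      rw [evC_subst] at this
      simp only [xTm, evC, Function.update_idem, Function.update_self] at this
      exact this.symm
    have h := (key i).trans ((by rw [hij] : _ = _).trans (key j).symm)
    simpa using D.xinj h
  by_cases hX : ∀ b, evC D.M D.xx t ∉ D.A b
  · obtain ⟨x, hx⟩ := D.cover _ hX
    have hx' : evC D.M D.xx (xc x) = D.xx x := by cases x <;> rfl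
    by_cases hx0 : x = .inr 0
    · subst hx0
      have h1 := faithful_PE D (s := t) (t := xTm F arF n 0) (hx.symm.trans hx'.symm)
      have h2 := PE_indToX h1
      rw [indToX_eq t hsig] at h2
      exact h2
    · exfalso
      have h1 := faithful D D.M (Function.update D.xx (.inr 0) (D.xx (.inr 1)))
        (s := t) (t := xc x) (hx.symm.trans hx'.symm)
      have h2 : evC D.M (Function.update D.xx (.inr 0) (D.xx (.inr 1))) (xc x) = D.xx x := by
        rw [← Function.update_of_ne hx0 (D.xx (.inr 1)) D.xx]
        cases x <;> rfl
      have : w 1 = w 0 := by rw [hw0]; exact h1.trans (h2.trans hx)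
      exact absurd (hwinj this) (by norm_num)
  · exfalso
    push Not at hX
    obtain ⟨b, hb⟩ := hX
    rw [← hw0] at hb
    obtain ⟨g, hg1, hg2, hg3⟩ := hyp (!b)
    -- height of t
    have hex : ∃ k, w 0 ∈ H D k := by rw [hw0]; exact H_ex D hc t
    obtain ⟨k, hk, hk'⟩ : ∃ k, w 0 ∈ H D (k+1) ∧ w 0 ∉ H D k := by
      have h1 := Nat.find_spec hex
      rcases hf : Nat.find hex with _ | k
      · rw [hf] at h1
        obtain ⟨x, hx⟩ := h1
        rw [← hx] at hb
        exact absurd hb (D.xA _ _)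
      · rw [hf] at h1
        exact ⟨k, h1, Nat.find_min hex (by omega)⟩
    have hwi : ∀ i, w i ∈ D.A b ∧ w i ∉ H D k := by
      intro i
      let σ : Equiv.Perm (XX n) := Equiv.swap (.inr 0) (.inr i)
      have h1 : phi D (fun x => D.xx (σ x)) (w 0) = w i := by
        rw [hw0, phi_ev]
        apply evC_congr _ _ _ _ hsig
        · intro j
          simp [σ, Equiv.swap_apply_of_ne_of_ne]
        · simp [σ]
      have hr : Rch D (w 0) := ⟨t, hw0.symm⟩
      refine ⟨?_, fun h => hk' ?_⟩
      · rw [← h1]; exact ((rename_H D hc _ σ _ hk).2 b).1 hb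
      · have h2 := (rename_H D hc _ σ.symm _ h).1
        have h3 := phi_inv D σ.symm hr
        rw [Equiv.symm_symm, h1] at h3
        rwa [h3] at h2
    have hwV : ∀ i, w i ∉ D.A (!b) := fun i => D.disj _ _ (hwi i).1
    let a : Fin (arF (!b) g) → {v // v ∉ D.A (!b)} := fun i => ⟨w (i.val + 1), hwV _⟩
    have ha : Function.Injective a := by
      intro i j hij
      have := hwinj (Subtype.ext_iff.1 hij)
      exact Fin.ext (by omega)
    let r := D.M.ops (!b) g (fun i => w (i.val + 1))
    have hrA : r ∈ D.A (!b) := by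
      by_contra hn
      exact not_var_app (hc _) hg2 a ha ⟨r, hn⟩ (D.indep (!b) _ (.var ⟨r, hn⟩) rfl)
    have hrH : r ∉ H D (k+1) := by
      intro h
      obtain ⟨p, hp, hpr⟩ := (H_A D h hrA).repr (fun e he => he.2)
      refine not_const_app hg3 a ha p ?_ (D.indep (!b) (.app g (fun i => .var (a i))) p hpr.symm)
      have hsub : {v : {v // v ∉ D.A (!b)} | v.1 ∈ H D k ∩ (D.A (!b))ᶜ} ⊆ (Set.range a)ᶜ := by
        rintro v hv ⟨i, rfl⟩
        exact (hwi _).2 hv.1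
      have := varsIn_bind p _ hp Tm.var _ (fun u hu => hsub hu)
      rwa [bind_var] at this
    -- the other side
    let f : XX n → D.M.carrier := Function.update D.xx (.inr 0)
      (D.M.ops (!b) g (fun i => D.xx (.inr (i.val + 1))))
    have hf : ∀ x, f x ∈ H D 1 := by
      intro x
      by_cases hx : x = .inr 0
      · subst hx
        simp only [f, Function.update_self]
        exact Sp_H D hc (.op g _ (fun i => H_Sp D (H_x D 0 _)))
      · simp only [f, Function.update_of_ne hx]
        exact H_x D 1 x
    have hr : phi D f (w 0) = r := by
      rw [hw0, phi_ev]
      have := evC_PE D.M D.xx (hcomm (!b) trivial g)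
      rw [evC_subst] at this
      simp only [evC, xTm, evC_subst] at this
      exact this
    have h1 := (subst_H D hc f hf (k+1) (w 0) hk).2 b hb
    rw [hr] at h1
    have hrV : r ∉ D.A b := by
      have := D.disj r (!b) hrA
      rwa [Bool.not_not] at this
    exact hrH (h1.mem (hc b) (fun e he => he.2) hrV).1

theorem main2 : GIso F arF n Ax Set.univ (xTm F arF n 0) := by
  have hx : ∀ (J : Set ℕ) (j : ℕ), j ∈ J →
      InSig F arF n (SigP F n Set.univ J) (xTm F arF n j) :=
    fun J j hj => ⟨hj, fun i => i.elim0⟩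
  have hs : ∀ v, substInd F arF n 0 v (xTm F arF n 0) = v := by
    intro v; simp [substInd, xTm]
  refine ⟨hx _ _ rfl, ⟨xTm F arF n 0, hx _ _ rfl, ?_, ?_⟩, ?_⟩
  · rw [hs]; exact .refl _ (hx _ _ rfl)
  · rw [hs]; exact .refl _ (hx _ _ rfl)
  · intro b _ g
    simp only [hs]
    refine .refl _ ⟨trivial, fun i => hx _ _ ⟨by omega, ?_⟩⟩
    have : i.val < arF b g := i.isLt
    omega

end Main

end FS

section Statement
variable (F : Bool → Type) (arF : ∀ b, F b → ℕ) (n : ℕ)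
variable (Ax : ∀ b, Set (Tm (F b) (arF b) ℕ × Tm (F b) (arF b) ℕ))

/-- Main theorem: if each of the two theories (over disjoint signatures) has a
function symbol of positive arity that is neither constant nor a projection,
then the logical isotropy group of the free model of `𝕋₁ + 𝕋₂` on `n`
generators is trivial: `G_{𝕋₁+𝕋₂}(Mₙ) = {[x]}`. -/
theorem isotropy_trivial
    (hyp : ∀ b, ∃ g : F b, 1 ≤ arF b g ∧ ¬ IsProj F arF Ax b g ∧ ¬ IsConst F arF Ax b g) :
    (∀ t : CT F arF n, GIso F arF n Ax Set.univ t →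
      PE F arF n Ax Set.univ (SigP F n Set.univ {0}) t (xTm F arF n 0)) ∧
    GIso F arF n Ax Set.univ (xTm F arF n 0) := by
  exact ⟨FS.main1 hyp, FS.main2⟩
end Statement
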